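/- Assume M > N, Q ≤ M, and L ≥ 2. Let σ : ℝ → ℝ be a strictly monotone continuous bijection from ℝ onto (0, ∞), applied coordinatewise, let X⁰ ∈ ℝ^{M×N} have rank N, and let Y ∈ ℝ^{Q×N}. Then the set of parameter tuples (W_1, …, W_{L+1}, b_1, …, b_{L+1}) for which the deep network achieves exactly zero ℒ² loss (i.e., W_{L+1} X^{(L)}_i + b_{L+1} = Y_i for all i, with X^{(ℓ)} defined by the layer recursion) is infinite. In particular, the global zero loss minimum of the cost is degenerate. -/

import Mathlib

open Matrix

/-- Hidden-layer recursion: `fwd M σ W b ℓ x` is the output `X^{(ℓ)}` of the `ℓ`-th hidden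
layer on input `x = X^{(0)}`, where `W ℓ`, `b ℓ` (0-based) are the weight and bias of the
`(ℓ+1)`-st hidden layer. -/
def fwd (M : ℕ) (σ : (Fin M → ℝ) → Fin M → ℝ)
    (W : ℕ → Matrix (Fin M) (Fin M) ℝ) (b : ℕ → Fin M → ℝ) :
    ℕ → (Fin M → ℝ) → Fin M → ℝ
  | 0, x => x
  | ℓ + 1, x => σ ((W ℓ).mulVec (fwd M σ W b ℓ x) + b ℓ)

/-!
A finite positive family `z` is the output of a layer with invertible weight `W`: pull `z` back
through `σ` and then through `W⁻¹`. The bias translates the result arbitrarily, hence can make it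
positive again, so the argument repeats down to the first layer. There the inputs are linearly
independent, so whatever the first bias is, some first weight attains any prescribed
pre-activations. Taking for `z` a positive translate of the inputs themselves, the output layer
undoes the translation and interpolates the targets. The first bias is free throughout, and it
ranges over an infinite set.
-/

theorem exists_forall_pos_add {ι R : Type*} [Finite ι] [AddCommGroup R] [LinearOrder R]
    [IsOrderedAddMonoid R] [NoMaxOrder R] (f : ι → R) : ∃ t, ∀ i, 0 < f i + t := by
  obtain ⟨C, hC⟩ := (Set.finite_range fun i => -f i).bddAbove
  obtain ⟨t, hCt⟩ := exists_gt C
  exact ⟨t, fun i => neg_lt_iff_pos_add'.1 ((hC ⟨i, rfl⟩).trans_lt hCt)⟩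

theorem exists_linearMap_apply_eq_of_linearIndependent {ι K V V' : Type*} [DivisionRing K]
    [AddCommGroup V] [Module K V] [AddCommGroup V'] [Module K V'] {x : ι → V}
    (hx : LinearIndependent K x) (y : ι → V') : ∃ f : V →ₗ[K] V', ∀ i, f (x i) = y i := by
  obtain ⟨g, hg⟩ := (Finsupp.linearCombination K x).exists_leftInverse_of_injective
    (LinearMap.ker_eq_bot.2 hx)
  have hgx (i : ι) : g (x i) = Finsupp.single i 1 := by
    simpa using LinearMap.congr_fun hg (Finsupp.single i 1)
  exact ⟨Finsupp.linearCombination K y ∘ₗ g, fun i => by simp [hgx]⟩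

theorem exists_mulVec_eq_of_linearIndependent {ι m n K : Type*} [Field K] [Fintype n]
    {x : ι → n → K} (hx : LinearIndependent K x) (y : ι → m → K) :
    ∃ A : Matrix m n K, ∀ i, A *ᵥ x i = y i := by
  classical
  obtain ⟨f, hf⟩ := exists_linearMap_apply_eq_of_linearIndependent hx y
  exact ⟨LinearMap.toMatrix' f, fun i => by rw [LinearMap.toMatrix'_mulVec, hf]⟩

theorem linearIndependent_col_of_rank_eq_card {m n R : Type*} [CommRing R] [Nontrivial R]
    [Fintype n] {A : Matrix m n R} (hA : A.rank = Fintype.card n) : LinearIndependent R A.col := by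
  rw [linearIndependent_iff_card_eq_finrank_span, Set.finrank, ← A.rank_eq_finrank_span_cols, hA]

theorem exists_activation_eq_of_pos {ι κ : Type*} {σ : ℝ → ℝ} (hσ : Set.Ioi 0 ⊆ Set.range σ)
    {z : ι → κ → ℝ} (hz : ∀ i k, 0 < z i k) : ∃ u : ι → κ → ℝ, ∀ i k, σ (u i k) = z i k := by
  choose u hu using fun i k => hσ (hz i k)
  exact ⟨u, hu⟩

theorem exists_pos_layer_preimage {ι κ : Type*} [Finite ι] [Fintype κ] [DecidableEq κ] {σ : ℝ → ℝ}
    (hσ : Set.Ioi 0 ⊆ Set.range σ) {W : Matrix κ κ ℝ} (hW : IsUnit W) {z : ι → κ → ℝ}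
    (hz : ∀ i k, 0 < z i k) :
    ∃ (b : κ → ℝ) (z' : ι → κ → ℝ), (∀ i k, 0 < z' i k) ∧
      ∀ i k, σ ((W *ᵥ z' i + b) k) = z i k := by
  obtain ⟨u, hu⟩ := exists_activation_eq_of_pos hσ hz
  obtain ⟨t, ht⟩ := exists_forall_pos_add fun p : ι × κ => (W⁻¹ *ᵥ u p.1) p.2
  let shift : κ → ℝ := fun _ => t
  have affine_eq (i : ι) : W *ᵥ (W⁻¹ *ᵥ u i + shift) + -(W *ᵥ shift) = u i := by
    rw [mulVec_add, mulVec_mulVec, mul_nonsing_inv W (W.isUnit_iff_isUnit_det.1 hW), one_mulVec,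
      add_neg_cancel_right]
  exact ⟨-(W *ᵥ shift), fun i => W⁻¹ *ᵥ u i + shift, fun i k => ht (i, k),
    fun i k => by rw [affine_eq, hu]⟩

section Network

variable {M : ℕ}

theorem fwd_congr (σ : (Fin M → ℝ) → Fin M → ℝ) {W W' : ℕ → Matrix (Fin M) (Fin M) ℝ}
    {b b' : ℕ → Fin M → ℝ} {n : ℕ} (hW : ∀ ℓ < n, W ℓ = W' ℓ) (hb : ∀ ℓ < n, b ℓ = b' ℓ)
    (x : Fin M → ℝ) : fwd M σ W b n x = fwd M σ W' b' n x := by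
  induction n with
  | zero => rfl
  | succ n ih =>
    rw [fwd, fwd, hW n n.lt_succ_self, hb n n.lt_succ_self,
      ih (fun ℓ hℓ => hW ℓ (Nat.lt_succ_of_lt hℓ)) fun ℓ hℓ => hb ℓ (Nat.lt_succ_of_lt hℓ)]

/-- The parameters `(W, b, V, c)` of a network with `L` hidden layers of width `M` which maps each
input `x i` exactly to `y i`, where `V` and `c` are the weight and bias of the output layer. As
`fwd` takes sequences indexed by `ℕ`, hidden parameters are extended by zero. -/
def zeroLossSet {ι : Type*} {Q : ℕ} (L : ℕ) (σ : ℝ → ℝ) (x : ι → Fin M → ℝ)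
    (y : ι → Fin Q → ℝ) :
    Set ((Fin L → Matrix (Fin M) (Fin M) ℝ) × (Fin L → Fin M → ℝ) ×
      Matrix (Fin Q) (Fin M) ℝ × (Fin Q → ℝ)) :=
  {p | ∀ i, p.2.2.1 *ᵥ
    fwd M (fun v k => σ (v k))
      (fun ℓ => if h : ℓ < L then p.1 ⟨ℓ, h⟩ else 0)
      (fun ℓ => if h : ℓ < L then p.2.1 ⟨ℓ, h⟩ else 0) L (x i) + p.2.2.2 = y i}

variable {ι : Type*} {Q : ℕ} {σ : ℝ → ℝ} {x : ι → Fin M → ℝ}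

theorem restrict_mem_zeroLossSet_iff {L : ℕ} {y : ι → Fin Q → ℝ}
    {W : ℕ → Matrix (Fin M) (Fin M) ℝ} {b : ℕ → Fin M → ℝ} {V : Matrix (Fin Q) (Fin M) ℝ}
    {c : Fin Q → ℝ} :
    ((fun ℓ : Fin L => W ℓ, fun ℓ : Fin L => b ℓ, V, c) ∈ zeroLossSet L σ x y) ↔
      ∀ i, V *ᵥ fwd M (fun v k => σ (v k)) W b L (x i) + c = y i := by
  refine forall_congr' fun i => ?_
  rw [fwd_congr (W' := W) (b' := b)]
  · exact fun ℓ hℓ => dif_pos hℓ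
  · exact fun ℓ hℓ => dif_pos hℓ

theorem exists_fwd_eq_of_pos [Finite ι] (hσ : Set.Ioi 0 ⊆ Set.range σ)
    (hx : LinearIndependent ℝ x) (W : ℕ → Matrix (Fin M) (Fin M) ℝ) (β : Fin M → ℝ) {n : ℕ}
    (hW : ∀ ℓ < n, IsUnit (W (ℓ + 1))) {z : ι → Fin M → ℝ} (hz : ∀ i k, 0 < z i k) :
    ∃ (A : Matrix (Fin M) (Fin M) ℝ) (b : ℕ → Fin M → ℝ), b 0 = β ∧
      ∀ i, fwd M (fun v k => σ (v k)) (Function.update W 0 A) b (n + 1) (x i) = z i := by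
  induction n generalizing z with
  | zero =>
    obtain ⟨u, hu⟩ := exists_activation_eq_of_pos hσ hz
    obtain ⟨A, hA⟩ := exists_mulVec_eq_of_linearIndependent hx fun i => u i - β
    exact ⟨A, fun _ => β, rfl, fun i => by ext k; simp [fwd, hA, hu]⟩
  | succ n ih =>
    obtain ⟨b', z', hz', layer_eq⟩ := exists_pos_layer_preimage hσ (hW n n.lt_succ_self) hz
    obtain ⟨A, b, hb, fwd_eq⟩ := ih (fun ℓ hℓ => hW ℓ (Nat.lt_succ_of_lt hℓ)) hz'
    refine ⟨A, Function.update b (n + 1) b', by simp [hb], fun i => ?_⟩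
    have fwd_update : fwd M (fun v k => σ (v k)) (Function.update W 0 A)
        (Function.update b (n + 1) b') (n + 1) (x i) = z' i := by
      rw [← fwd_eq i]
      exact fwd_congr _ (fun _ _ => rfl) (fun ℓ hℓ => Function.update_of_ne hℓ.ne _ _) _
    ext k
    rw [fwd, fwd_update, Function.update_of_ne n.succ_ne_zero, Function.update_self, layer_eq]

theorem exists_zero_loss_completion (hσ : Set.Ioi 0 ⊆ Set.range σ) (hx : LinearIndependent ℝ x)
    (y : ι → Fin Q → ℝ) (W : ℕ → Matrix (Fin M) (Fin M) ℝ) (β : Fin M → ℝ) {n : ℕ}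
    (hW : ∀ ℓ < n, IsUnit (W (ℓ + 1))) :
    ∃ (A : Matrix (Fin M) (Fin M) ℝ) (b : ℕ → Fin M → ℝ) (V : Matrix (Fin Q) (Fin M) ℝ)
      (c : Fin Q → ℝ), b 0 = β ∧
        ∀ i, V *ᵥ fwd M (fun v k => σ (v k)) (Function.update W 0 A) b (n + 1) (x i) + c = y i := by
  have : Finite ι := hx.finite_of_isNoetherian
  obtain ⟨t, ht⟩ := exists_forall_pos_add fun p : ι × Fin M => x p.1 p.2
  let shift : Fin M → ℝ := fun _ => t
  obtain ⟨A, b, hb, fwd_eq⟩ :=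
    exists_fwd_eq_of_pos hσ hx W β hW (z := fun i => x i + shift) fun i k => ht (i, k)
  obtain ⟨V, hV⟩ := exists_mulVec_eq_of_linearIndependent hx y
  refine ⟨A, b, V, -(V *ᵥ shift), hb, fun i => ?_⟩
  rw [fwd_eq, mulVec_add, hV, add_neg_cancel_right]

theorem zero_loss_minimizers_infinite_general {L : ℕ} (hM : 0 < M) (hL : 0 < L)
    (hσ : Set.Ioi 0 ⊆ Set.range σ) (hx : LinearIndependent ℝ x) (y : ι → Fin Q → ℝ) :
    (zeroLossSet L σ x y).Infinite := by
  obtain ⟨n, rfl⟩ := Nat.exists_eq_add_one.2 hL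
  have : Nonempty (Fin M) := ⟨⟨0, hM⟩⟩
  have first_bias_surjective : (fun p => p.2.1 0) '' zeroLossSet (n + 1) σ x y = Set.univ := by
    refine Set.eq_univ_of_forall fun β => ?_
    obtain ⟨A, b, V, c, hb, fit⟩ :=
      exists_zero_loss_completion hσ hx y 1 β (n := n) fun _ _ => isUnit_one
    exact ⟨_, restrict_mem_zeroLossSet_iff.2 fit, hb⟩
  exact .of_image _ (first_bias_surjective ▸ Set.infinite_univ)

end Network

theorem zero_loss_minimizers_infinite {M N Q L : ℕ}
    (hMN : N < M) (hQM : Q ≤ M) (hL : 2 ≤ L)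
    (σ : ℝ → ℝ) (hmono : StrictMono σ ∨ StrictAnti σ) (hcont : Continuous σ)
    (hrange : Set.range σ = Set.Ioi (0 : ℝ))
    (X0 : Matrix (Fin M) (Fin N) ℝ) (hrank : X0.rank = N)
    (Y : Matrix (Fin Q) (Fin N) ℝ) :
    {p : (Fin L → Matrix (Fin M) (Fin M) ℝ) × (Fin L → Fin M → ℝ) ×
        Matrix (Fin Q) (Fin M) ℝ × (Fin Q → ℝ) |
      ∀ i : Fin N,
        (p.2.2.1).mulVec
            (fwd M (fun v k => σ (v k))
              (fun ℓ => if h : ℓ < L then p.1 ⟨ℓ, h⟩ else 0)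
              (fun ℓ => if h : ℓ < L then p.2.1 ⟨ℓ, h⟩ else 0)
              L (fun j => X0 j i)) + p.2.2.2 = fun q => Y q i}.Infinite := by
  exact zero_loss_minimizers_infinite_general (by omega) (by omega) hrange.ge
    (linearIndependent_col_of_rank_eq_card (by rw [hrank, Fintype.card_fin])) Y.col
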